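/- A priori bounds on the Riccati solutions, uniform over the approximating family: let (A_n, B_n, C_n, Q_n, R_n, m^n), n ∈ ℕ, be coefficient data all having the same terminal matrices P(i), and assume the uniform bounds sup_n max_{i∈S} (‖A_n(i)‖ + ‖C_n(i)‖ + ‖Q_n(i)‖) < ∞ and sup_n max_{i,j∈S} |m^n_{ij}| < ∞. Let K_n solve the coupled Riccati system associated with the n-th datum. Then there exist constants C₀ > 0 and k₀ > 0, independent of n, t, i and x, such that for every n ∈ ℕ, t ∈ [0,T], x ∈ ℝ^d and i ∈ S one has 0 ≤ xᵀK_n(t,i)x ≤ C₀ e^{k₀ T} |x|² (T+1), and consequently ‖K_n(t,i)‖ ≤ C₀ e^{k₀ T} (T+1). -/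

import Mathlib

open Matrix Set Filter Topology

attribute [local instance] Matrix.normedAddCommGroup Matrix.normedSpace

noncomputable section

/-- Right-hand side of the coupled Riccati system associated with a coefficient
datum `(A, B, C, Q, R, m)`, evaluated at the tuple of matrices `K : Fin N → Matrix`. -/
def riccatiRHS {d l N : ℕ}
    (A C : Fin N → Matrix (Fin d) (Fin d) ℝ)
    (B : Fin N → Matrix (Fin d) (Fin l) ℝ)
    (Q : Fin N → Matrix (Fin d) (Fin d) ℝ)
    (R : Fin N → Matrix (Fin l) (Fin l) ℝ)
    (m : Fin N → Fin N → ℝ)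
    (K : Fin N → Matrix (Fin d) (Fin d) ℝ) (i : Fin N) :
    Matrix (Fin d) (Fin d) ℝ :=
  (C i)ᵀ * K i * C i + (A i)ᵀ * K i + K i * A i
    - K i * B i * (R i)⁻¹ * (B i)ᵀ * K i + Q i + ∑ j, m i j • K j

/-- `K : ℝ → Fin N → Matrix` is a solution on `[0,T]` of the coupled Riccati
terminal value problem: it takes symmetric values, is differentiable in `t` with
`−K̇(t,i)` equal to the Riccati right-hand side, and satisfies `K(T,i) = P i`. -/
def IsRiccatiSolution {d l N : ℕ} (T : ℝ)
    (A C : Fin N → Matrix (Fin d) (Fin d) ℝ)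
    (B : Fin N → Matrix (Fin d) (Fin l) ℝ)
    (Q : Fin N → Matrix (Fin d) (Fin d) ℝ)
    (R : Fin N → Matrix (Fin l) (Fin l) ℝ)
    (m : Fin N → Fin N → ℝ)
    (P : Fin N → Matrix (Fin d) (Fin d) ℝ)
    (K : ℝ → Fin N → Matrix (Fin d) (Fin d) ℝ) : Prop :=
  (∀ t ∈ Icc (0:ℝ) T, ∀ i, (K t i).IsSymm) ∧
  (∀ t ∈ Icc (0:ℝ) T, ∀ i,
    HasDerivWithinAt (fun s => K s i)
      (-(riccatiRHS A C B Q R m (K t) i)) (Icc (0:ℝ) T) t) ∧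
  (∀ i, K T i = P i)

/-!
The Riccati right-hand side is a coupled Lyapunov operator `L` plus a quadratic term. On a kernel
vector of `F i` the form of `(L F) i` is nonnegative as soon as all `F j` are, so `F` cannot leave
the positive semidefinite cone backward in time: `F b ≥ 0` and `-F' - L F ≥ 0` force `F ≥ 0`. This
comparison, with the quadratic term absorbed into the drift `A - ½ B R⁻¹ Bᵀ K`, gives `0 ≤ K`.
With drift `A`, applied to `c exp(k (T - t)) • 1 - K`, it gives the upper bound, since there the
quadratic term has the favourable sign. As the rows of `m` sum to zero, `m` drops out of `L 1`, so
`c` and `k` depend only on the bounds for `A`, `C`, `Q` and `P`.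
-/

theorem isClosed_setOf_posSemidef {n : Type*} [Finite n] :
    IsClosed {M : Matrix n n ℝ | M.PosSemidef} := by
  cases nonempty_fintype n
  simp only [posSemidef_iff_dotProduct_mulVec, ofPred_and, ofPred_forall]
  refine (isClosed_eq (continuous_id.matrix_conjTranspose) continuous_id).inter
    (isClosed_iInter fun x => isClosed_le continuous_const ?_)
  exact continuous_const.dotProduct (continuous_id.matrix_mulVec continuous_const)

theorem hasDerivWithinAt_dotProduct_mulVec {n : Type*} [Fintype n] {F : ℝ → Matrix n n ℝ}
    {F' : Matrix n n ℝ} {s : Set ℝ} {t : ℝ} (h : HasDerivWithinAt F F' s t) (x y : n → ℝ) :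
    HasDerivWithinAt (fun r => x ⬝ᵥ F r *ᵥ y) (x ⬝ᵥ F' *ᵥ y) s t := by
  let L : Matrix n n ℝ →ₗ[ℝ] ℝ :=
    { toFun M := x ⬝ᵥ M *ᵥ y
      map_add' M M' := by rw [add_mulVec, dotProduct_add]
      map_smul' c M := by rw [smul_mulVec, dotProduct_smul, RingHom.id_apply] }
  exact L.toContinuousLinearMap.hasFDerivAt.comp_hasDerivWithinAt t h

theorem exists_dotProduct_mulVec_nonpos {n : Type*} [Fintype n] {M : Matrix n n ℝ}
    (hM : M.IsHermitian) (hnot : ¬M.PosDef) : ∃ x ≠ 0, x ⬝ᵥ M *ᵥ x ≤ 0 := by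
  by_contra! hpos
  exact hnot (.of_dotProduct_mulVec_pos hM fun {x} hx => hpos x hx)

theorem isCompact_setOf_not_posDef {X n : Type*} [TopologicalSpace X] [T2Space X] [Finite n]
    {s : Set X} (hs : IsCompact s) {F : X → Matrix n n ℝ} (hF : ContinuousOn F s)
    (hsymm : ∀ p ∈ s, (F p).IsHermitian) : IsCompact {p ∈ s | ¬(F p).PosDef} := by
  cases nonempty_fintype n
  let D : Set (X × (n → ℝ)) := s ×ˢ Metric.sphere 0 1
  have hD : IsCompact D := hs.prod (isCompact_sphere 0 1)
  have hcont : ContinuousOn (fun q : X × (n → ℝ) => q.2 ⬝ᵥ F q.1 *ᵥ q.2) D := by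
    have hform : Continuous fun q : Matrix n n ℝ × (n → ℝ) => q.2 ⬝ᵥ q.1 *ᵥ q.2 :=
      continuous_snd.dotProduct (continuous_fst.matrix_mulVec continuous_snd)
    exact hform.comp_continuousOn
      ((hF.comp continuousOn_fst fun q hq => hq.1).prodMk continuousOn_snd)
  have hZ : IsCompact (D ∩ (fun q => q.2 ⬝ᵥ F q.1 *ᵥ q.2) ⁻¹' Iic 0) :=
    hD.of_isClosed_subset (hcont.preimage_isClosed_of_isClosed hD.isClosed isClosed_Iic)
      inter_subset_left
  convert hZ.image continuous_fst using 1
  ext p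
  constructor
  · rintro ⟨hp, hnot⟩
    obtain ⟨x, hx, hle⟩ := exists_dotProduct_mulVec_nonpos (hsymm p hp) hnot
    refine ⟨(p, ‖x‖⁻¹ • x), ⟨⟨hp, by simp [norm_smul, hx]⟩, ?_⟩, rfl⟩
    simp only [mem_preimage, mem_Iic, mulVec_smul, dotProduct_smul, smul_dotProduct, smul_eq_mul]
    exact mul_nonpos_of_nonneg_of_nonpos (by positivity)
      (mul_nonpos_of_nonneg_of_nonpos (by positivity) hle)
  · rintro ⟨⟨q, x⟩, ⟨⟨hq, hx⟩, hle⟩, rfl⟩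
    exact ⟨hq, fun hpos => (hpos.dotProduct_mulVec_pos
      (ne_zero_of_mem_unit_sphere ⟨x, hx⟩)).not_ge hle⟩

theorem deriv_nonneg_of_nonneg_right {f : ℝ → ℝ} {f' t b : ℝ} (htb : t < b)
    (hf : HasDerivWithinAt f f' (Ioc t b) t) (ht : f t ≤ 0) (hpos : ∀ s ∈ Ioc t b, 0 ≤ f s) :
    0 ≤ f' := by
  have := left_nhdsWithin_Ioc_neBot htb
  refine ge_of_tendsto ((hasDerivWithinAt_iff_tendsto_slope' (by simp)).1 hf)
    (eventually_nhdsWithin_of_forall fun s hs => ?_)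
  rw [slope_def_field]
  exact div_nonneg (by linarith [hpos s hs]) (sub_nonneg.2 hs.1.le)

theorem hasDerivAt_mul_exp_backward (c k T t : ℝ) :
    HasDerivAt (fun s => c * Real.exp (k * (T - s))) (-(k * (c * Real.exp (k * (T - t))))) t :=
  ((((hasDerivAt_id t).const_sub T).const_mul k).exp.const_mul c).congr_deriv (by
    rw [id]
    ring)

theorem posDef_of_deriv_neg_on_ker {n ι : Type*} [Fintype n] [Finite ι] {a b : ℝ}
    {F F' : ℝ → ι → Matrix n n ℝ} (hsymm : ∀ t ∈ Icc a b, ∀ i, (F t i).IsHermitian)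
    (hderiv : ∀ t ∈ Icc a b, ∀ i, HasDerivWithinAt (fun s => F s i) (F' t i) (Icc a b) t)
    (hb : ∀ i, (F b i).PosDef)
    (hneg : ∀ t ∈ Icc a b, (∀ j, (F t j).PosSemidef) →
      ∀ i x, x ≠ 0 → F t i *ᵥ x = 0 → x ⬝ᵥ F' t i *ᵥ x < 0) :
    ∀ t ∈ Icc a b, ∀ i, (F t i).PosDef := by
  by_contra! hbad
  obtain ⟨t₀, ht₀, i₀, hi₀⟩ := hbad
  -- `t` is the last time at which some component fails to be positive definite.
  obtain ⟨t, ht, hmax⟩ := (isCompact_iUnion fun i => isCompact_setOf_not_posDef isCompact_Icc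
    (fun t ht => (hderiv t ht i).continuousWithinAt) fun t ht => hsymm t ht i).exists_isGreatest
    ⟨t₀, mem_iUnion.2 ⟨i₀, ht₀, hi₀⟩⟩
  obtain ⟨i, ht, hi⟩ := mem_iUnion.1 ht
  have htb : t < b := ht.2.lt_of_ne fun h => hi (h ▸ hb i)
  have hsub : Ioc t b ⊆ Icc a b := fun s hs => ⟨ht.1.trans hs.1.le, hs.2⟩
  have hafter : ∀ s ∈ Ioc t b, ∀ j, (F s j).PosDef := fun s hs j => by
    by_contra hj
    exact hs.1.not_ge (hmax (mem_iUnion.2 ⟨j, hsub hs, hj⟩))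
  have hnow : ∀ j, (F t j).PosSemidef := fun j => by
    have := left_nhdsWithin_Ioc_neBot htb
    exact isClosed_setOf_posSemidef.mem_of_tendsto ((hderiv t ht j).continuousWithinAt.mono hsub)
      (eventually_nhdsWithin_of_forall fun s hs => (hafter s hs j).posSemidef)
  obtain ⟨x, hx, hle⟩ := exists_dotProduct_mulVec_nonpos (hsymm t ht i) hi
  have hzero : x ⬝ᵥ F t i *ᵥ x = 0 := hle.antisymm ((hnow i).dotProduct_mulVec_nonneg x)
  refine (hneg t ht hnow i x hx (((hnow i).dotProduct_mulVec_zero_iff x).1 hzero)).not_ge ?_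
  exact deriv_nonneg_of_nonneg_right htb
    ((hasDerivWithinAt_dotProduct_mulVec (hderiv t ht i) x x).mono hsub) hle
    fun s hs => (hafter s hs i).posSemidef.dotProduct_mulVec_nonneg x

theorem posSemidef_smul_one_sub_mono {n : Type*} [DecidableEq n] {M : Matrix n n ℝ} {c c' : ℝ}
    (hc : c ≤ c') (hM : (c • 1 - M).PosSemidef) : (c' • 1 - M).PosSemidef := by
  have hsplit : c' • 1 - M = (c • 1 - M) + (c' - c) • 1 := by module
  exact hsplit ▸ hM.add (PosSemidef.one.smul (sub_nonneg.2 hc))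

section EntrywiseNorm

variable {k n p : Type*} [Fintype k] [Fintype n] [Fintype p]

theorem norm_mul_le_card_mul (A : Matrix k n ℝ) (B : Matrix n p ℝ) :
    ‖A * B‖ ≤ Fintype.card n * (‖A‖ * ‖B‖) := by
  refine (norm_le_iff (by positivity)).2 fun i j => ?_
  calc ‖(A * B) i j‖ ≤ ∑ r, ‖A i r * B r j‖ := norm_sum_le _ _
    _ ≤ ∑ _r : n, ‖A‖ * ‖B‖ := by
      gcongr with r
      rw [norm_mul]
      gcongr <;> exact norm_entry_le_entrywise_sup_norm _
    _ = Fintype.card n * (‖A‖ * ‖B‖) := by simp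

theorem dotProduct_mulVec_le_card_mul_norm (M : Matrix n n ℝ) (x : n → ℝ) :
    x ⬝ᵥ M *ᵥ x ≤ Fintype.card n * ‖M‖ * (x ⬝ᵥ x) := by
  calc x ⬝ᵥ M *ᵥ x = ∑ i, ∑ j, x i * (M i j * x j) := by
        simp only [dotProduct, mulVec, Finset.mul_sum]
    _ ≤ ∑ i, ∑ j, ‖M‖ * (|x i| * |x j|) := by
      refine Finset.sum_le_sum fun i _ => Finset.sum_le_sum fun j _ => ?_
      calc x i * (M i j * x j) ≤ |x i * (M i j * x j)| := le_abs_self _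
        _ = |M i j| * (|x i| * |x j|) := by rw [abs_mul, abs_mul, mul_left_comm]
        _ ≤ ‖M‖ * (|x i| * |x j|) := by
          gcongr
          exact norm_entry_le_entrywise_sup_norm M
    _ = ‖M‖ * (∑ i, |x i|) ^ 2 := by rw [sq, Finset.sum_mul_sum]; simp only [Finset.mul_sum]
    _ ≤ ‖M‖ * (Fintype.card n * ∑ i, |x i| ^ 2) := by
      gcongr
      exact sq_sum_le_card_mul_sum_sq
    _ = Fintype.card n * ‖M‖ * (x ⬝ᵥ x) := by simp only [sq_abs, dotProduct, ← sq]; ring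

variable [DecidableEq n] {M : Matrix n n ℝ} {c : ℝ}

theorem posSemidef_smul_one_sub_iff (hM : M.IsHermitian) :
    (c • 1 - M).PosSemidef ↔ ∀ x, x ⬝ᵥ M *ᵥ x ≤ c * (x ⬝ᵥ x) := by
  have hsymm : (c • 1 - M).IsHermitian := (isHermitian_one.smul (.all c)).sub hM
  rw [posSemidef_iff_dotProduct_mulVec, and_iff_right hsymm]
  simp [sub_mulVec, smul_mulVec]

theorem posSemidef_smul_one_sub_of_norm_le (hM : M.IsHermitian) (h : ‖M‖ ≤ c) :
    ((Fintype.card n * c) • 1 - M).PosSemidef := by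
  refine (posSemidef_smul_one_sub_iff hM).2 fun x => ?_
  have hx : 0 ≤ x ⬝ᵥ x := dotProduct_self_star_nonneg x
  exact (dotProduct_mulVec_le_card_mul_norm M x).trans (by gcongr)

theorem norm_le_of_posSemidef (hc : 0 ≤ c) (hM : M.PosSemidef)
    (hcM : (c • 1 - M).PosSemidef) : ‖M‖ ≤ c := by
  refine (norm_le_iff hc).2 fun i j => ?_
  have hupper := (posSemidef_smul_one_sub_iff hM.isHermitian).1 hcM
  have hji : M j i = M i j := hM.isHermitian.apply i j
  have hii := hupper (Pi.single i 1)
  have hjj := hupper (Pi.single j 1)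
  have hadd := hM.dotProduct_mulVec_nonneg (Pi.single i 1 + Pi.single j 1)
  have hsub := hM.dotProduct_mulVec_nonneg (Pi.single i 1 - Pi.single j 1)
  simp only [mulVec_single, MulOpposite.op_one, one_smul, single_dotProduct, col_apply, one_mul,
    dotProduct_single, Pi.single_eq_same, mul_one, star_trivial, mulVec_add, dotProduct_add,
    add_dotProduct, mulVec_sub, dotProduct_sub, sub_dotProduct, sub_nonneg,
    tsub_le_iff_right] at hii hjj hadd hsub
  rw [Real.norm_eq_abs, abs_le]
  constructor <;> linarith

end EntrywiseNorm

theorem exists_forall_posSemidef_smul_one_sub {X n ι : Type*} [TopologicalSpace X] [Finite n]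
    [DecidableEq n] [Finite ι] {s : Set X} (hs : IsCompact s) {F : X → ι → Matrix n n ℝ}
    (hF : ContinuousOn F s) (hsymm : ∀ p ∈ s, ∀ i, (F p i).IsHermitian) :
    ∃ c : ℝ, ∀ p ∈ s, ∀ i, (c • 1 - F p i).PosSemidef := by
  cases nonempty_fintype n
  cases nonempty_fintype ι
  obtain ⟨c, hc⟩ := hs.exists_bound_of_continuousOn hF
  exact ⟨Fintype.card n * c, fun p hp i =>
    posSemidef_smul_one_sub_of_norm_le (hsymm p hp i) ((norm_le_pi_norm (F p) i).trans (hc p hp))⟩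

theorem posSemidef_mul_inv_mul_transpose {k n : Type*} [Fintype k] [Finite n] [DecidableEq k]
    {R : Matrix k k ℝ} (hR : R.PosDef) (B : Matrix n k ℝ) : (B * R⁻¹ * Bᵀ).PosSemidef := by
  cases nonempty_fintype n
  exact hR.inv.posSemidef.mul_mul_conjTranspose_same B

section LyapunovSystem

variable {n ι : Type*} [Fintype n] [Fintype ι]

/-- The coupled Lyapunov operator `F ↦ (Cᵢᵀ Fᵢ Cᵢ + Aᵢᵀ Fᵢ + Fᵢ Aᵢ + ∑ⱼ mᵢⱼ Fⱼ)ᵢ` of a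
regime-switching linear system; it is the linear part of the Riccati right-hand side. -/
def lyapunovOp (A C : ι → Matrix n n ℝ) (m : ι → ι → ℝ) :
    (ι → Matrix n n ℝ) →ₗ[ℝ] (ι → Matrix n n ℝ) where
  toFun F i := (C i)ᵀ * F i * C i + (A i)ᵀ * F i + F i * A i + ∑ j, m i j • F j
  map_add' F G := by
    ext1 i
    simp only [Pi.add_apply, mul_add, add_mul, smul_add, Finset.sum_add_distrib]
    abel
  map_smul' c F := by
    ext1 i
    simp only [Pi.smul_apply, Matrix.mul_smul, Matrix.smul_mul, smul_add, Finset.smul_sum,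
      RingHom.id_apply, smul_comm c]

theorem lyapunovOp_apply (A C : ι → Matrix n n ℝ) (m : ι → ι → ℝ) (F : ι → Matrix n n ℝ) (i : ι) :
    lyapunovOp A C m F i =
      (C i)ᵀ * F i * C i + (A i)ᵀ * F i + F i * A i + ∑ j, m i j • F j := rfl

theorem isHermitian_lyapunovOp {A C : ι → Matrix n n ℝ} {m : ι → ι → ℝ} {F : ι → Matrix n n ℝ}
    (hF : ∀ i, (F i).IsHermitian) (i : ι) : (lyapunovOp A C m F i).IsHermitian := by
  have hFT : ∀ j, (F j)ᵀ = F j := fun j => isHermitian_iff_isSymm.1 (hF j)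
  refine isHermitian_iff_isSymm.2 ?_
  simp only [IsSymm, lyapunovOp_apply, transpose_add, transpose_mul, transpose_transpose,
    transpose_sum, transpose_smul, hFT, Matrix.mul_assoc]
  abel

/-- On the kernel of `F i` the terms `Aᵀ F`, `F A` and `m i i • F i` vanish, and what remains is a
sum of positive semidefinite forms. -/
theorem dotProduct_lyapunovOp_mulVec_nonneg {A C : ι → Matrix n n ℝ} {m : ι → ι → ℝ}
    {F : ι → Matrix n n ℝ} {i : ι} (hm : ∀ j, i ≠ j → 0 ≤ m i j) (hF : ∀ j, (F j).PosSemidef)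
    {x : n → ℝ} (hx : F i *ᵥ x = 0) : 0 ≤ x ⬝ᵥ lyapunovOp A C m F i *ᵥ x := by
  have hC : 0 ≤ x ⬝ᵥ ((C i)ᵀ * F i * C i) *ᵥ x :=
    ((hF i).conjTranspose_mul_mul_same (C i)).dotProduct_mulVec_nonneg x
  have hA : x ⬝ᵥ ((A i)ᵀ * F i) *ᵥ x = 0 := by
    rw [← mulVec_mulVec, hx, mulVec_zero, dotProduct_zero]
  have hA' : x ⬝ᵥ (F i * A i) *ᵥ x = 0 := by
    rw [← mulVec_mulVec, dotProduct_mulVec, ← mulVec_transpose,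
      isHermitian_iff_isSymm.1 (hF i).isHermitian, hx, zero_dotProduct]
  have hsum : 0 ≤ x ⬝ᵥ (∑ j, m i j • F j) *ᵥ x := by
    rw [sum_mulVec, dotProduct_sum]
    refine Finset.sum_nonneg fun j _ => ?_
    rw [smul_mulVec, dotProduct_smul, smul_eq_mul]
    rcases eq_or_ne i j with rfl | hij
    · rw [hx, dotProduct_zero, mul_zero]
    · exact mul_nonneg (hm j hij) ((hF j).dotProduct_mulVec_nonneg x)
  rw [lyapunovOp_apply, add_mulVec, add_mulVec, add_mulVec, dotProduct_add, dotProduct_add,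
    dotProduct_add]
  linarith

theorem posSemidef_smul_one_sub_lyapunovOp_one_add [DecidableEq n] {A C : ι → Matrix n n ℝ}
    {m : ι → ι → ℝ} {i : ι} {Q : Matrix n n ℝ} {M : ℝ} (hm : ∑ j, m i j = 0)
    (hQ : Q.IsHermitian) (hM : ‖A i‖ + ‖C i‖ + ‖Q‖ ≤ M) :
    ((Fintype.card n * (Fintype.card n * M ^ 2 + 2 * M)) • 1
      - (lyapunovOp A C m 1 i + Q)).PosSemidef := by
  have hone : lyapunovOp A C m 1 i = (C i)ᵀ * C i + (A i)ᵀ + A i := by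
    simp [lyapunovOp_apply, ← Finset.sum_smul, hm]
  have hsymm := (isHermitian_lyapunovOp (A := A) (C := C) (m := m)
    (F := 1) (fun _ => isHermitian_one) i).add hQ
  have hA := norm_nonneg (A i)
  have hC := norm_nonneg (C i)
  have hQ' := norm_nonneg Q
  have hCC : ‖(C i)ᵀ * C i‖ ≤ Fintype.card n * M ^ 2 := by
    calc ‖(C i)ᵀ * C i‖ ≤ Fintype.card n * (‖(C i)ᵀ‖ * ‖C i‖) := norm_mul_le_card_mul _ _
      _ = Fintype.card n * ‖C i‖ ^ 2 := by rw [norm_transpose, sq]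
      _ ≤ Fintype.card n * M ^ 2 := by gcongr; linarith
  have hnorm : ‖lyapunovOp A C m 1 i + Q‖ ≤ Fintype.card n * M ^ 2 + 2 * M := by
    calc ‖lyapunovOp A C m 1 i + Q‖
        ≤ ‖(C i)ᵀ * C i‖ + ‖(A i)ᵀ‖ + ‖A i‖ + ‖Q‖ := by rw [hone]; exact norm_add₄_le
      _ ≤ Fintype.card n * M ^ 2 + 2 * M := by rw [norm_transpose]; linarith
  exact posSemidef_smul_one_sub_of_norm_le hsymm hnorm

variable {a b : ℝ} {A C : ℝ → ι → Matrix n n ℝ} {m : ℝ → ι → ι → ℝ}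
  {F F' : ℝ → ι → Matrix n n ℝ}

theorem posDef_of_lyapunov_posDef (hm : ∀ t ∈ Icc a b, ∀ i j, i ≠ j → 0 ≤ m t i j)
    (hsymm : ∀ t ∈ Icc a b, ∀ i, (F t i).IsHermitian)
    (hderiv : ∀ t ∈ Icc a b, ∀ i, HasDerivWithinAt (fun s => F s i) (F' t i) (Icc a b) t)
    (hb : ∀ i, (F b i).PosDef)
    (hF : ∀ t ∈ Icc a b, ∀ i, (-F' t i - lyapunovOp (A t) (C t) (m t) (F t) i).PosDef) :
    ∀ t ∈ Icc a b, ∀ i, (F t i).PosDef := by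
  refine posDef_of_deriv_neg_on_ker hsymm hderiv hb fun t ht hpos i x hx hker => ?_
  have hlyap := dotProduct_lyapunovOp_mulVec_nonneg (A := A t) (C := C t) (hm t ht i) hpos hker
  have hstrict := (hF t ht i).dotProduct_mulVec_pos hx
  rw [star_trivial, sub_mulVec, neg_mulVec, dotProduct_sub, dotProduct_neg] at hstrict
  linarith

/-- The strict comparison applies to `F + δ(s) • 1` with `δ(s) = ε exp((k + 1)(t - s))`, where `k`
bounds the Lyapunov operator at the identity: the shift adds `δ ((k + 1) • 1 - L 1)` to the
residual `-F' - L F`. -/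
theorem posSemidef_of_lyapunov_posSemidef (hA : ContinuousOn A (Icc a b))
    (hC : ContinuousOn C (Icc a b)) (hmc : ContinuousOn m (Icc a b))
    (hm : ∀ t ∈ Icc a b, ∀ i j, i ≠ j → 0 ≤ m t i j)
    (hsymm : ∀ t ∈ Icc a b, ∀ i, (F t i).IsHermitian)
    (hderiv : ∀ t ∈ Icc a b, ∀ i, HasDerivWithinAt (fun s => F s i) (F' t i) (Icc a b) t)
    (hb : ∀ i, (F b i).PosSemidef)
    (hF : ∀ t ∈ Icc a b, ∀ i, (-F' t i - lyapunovOp (A t) (C t) (m t) (F t) i).PosSemidef) :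
    ∀ t ∈ Icc a b, ∀ i, (F t i).PosSemidef := by
  classical
  have hcont : ContinuousOn (fun t => lyapunovOp (A t) (C t) (m t) 1) (Icc a b) := by
    have hmij := fun i j => continuousOn_pi.1 (continuousOn_pi.1 hmc i) j
    rw [continuousOn_pi] at hA hC ⊢
    simp only [lyapunovOp_apply]
    fun_prop
  obtain ⟨k, hk⟩ := exists_forall_posSemidef_smul_one_sub isCompact_Icc hcont
    fun t _ => isHermitian_lyapunovOp fun _ => isHermitian_one
  intro t ht i
  have hshift : ∀ ε > (0 : ℝ), (F t i + ε • 1).PosDef := by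
    intro ε hε
    let δ : ℝ → ℝ := fun s => ε * Real.exp ((k + 1) * (t - s))
    have hδ : ∀ s, 0 < δ s := fun s => by positivity
    have hδt : δ t = ε := by simp [δ]
    rw [← hδt]
    refine posDef_of_lyapunov_posDef (A := A) (C := C) (F := fun s i => F s i + δ s • 1)
      (F' := fun s i => F' s i + (-((k + 1) * δ s)) • 1) hm
      (fun s hs i => (hsymm s hs i).add (isHermitian_one.smul (.all _)))
      (fun s hs i => (hderiv s hs i).add
        ((hasDerivAt_mul_exp_backward ε (k + 1) t s).hasDerivWithinAt.smul_const _))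
      (fun i => PosDef.posSemidef_add (hb i) (PosDef.one.smul (hδ b))) (fun s hs i => ?_) t ht i
    have hlin : lyapunovOp (A s) (C s) (m s) (fun i => F s i + δ s • 1) =
        lyapunovOp (A s) (C s) (m s) (F s) + δ s • lyapunovOp (A s) (C s) (m s) 1 := by
      rw [← map_smul, ← map_add]
      rfl
    have hresidual : -(F' s i + (-((k + 1) * δ s)) • 1)
          - lyapunovOp (A s) (C s) (m s) (fun i => F s i + δ s • 1) i =
        (-F' s i - lyapunovOp (A s) (C s) (m s) (F s) i) +
          δ s • ((k • 1 - lyapunovOp (A s) (C s) (m s) 1 i) + 1) := by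
      rw [hlin, Pi.add_apply, Pi.smul_apply]
      module
    rw [hresidual]
    exact PosDef.posSemidef_add (hF s hs i)
      ((PosDef.posSemidef_add (hk s hs i) PosDef.one).smul (hδ s))
  have hlim : Tendsto (fun ε : ℝ => F t i + ε • 1) (𝓝[>] 0) (𝓝 (F t i)) := by
    have : Continuous fun ε : ℝ => F t i + ε • (1 : Matrix n n ℝ) := by fun_prop
    simpa using (this.tendsto 0).mono_left nhdsWithin_le_nhds
  exact isClosed_setOf_posSemidef.mem_of_tendsto hlim
    (eventually_nhdsWithin_of_forall fun ε hε => (hshift ε hε).posSemidef)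

end LyapunovSystem

section Riccati

variable {d l N : ℕ} {A C Q : Fin N → Matrix (Fin d) (Fin d) ℝ}
  {B : Fin N → Matrix (Fin d) (Fin l) ℝ} {R : Fin N → Matrix (Fin l) (Fin l) ℝ}
  {m : Fin N → Fin N → ℝ}

theorem riccatiRHS_eq_lyapunovOp_sub (K : Fin N → Matrix (Fin d) (Fin d) ℝ) (i : Fin N) :
    riccatiRHS A C B Q R m K i =
      lyapunovOp A C m K i - K i * (B i * (R i)⁻¹ * (B i)ᵀ) * K i + Q i := by
  simp only [riccatiRHS, lyapunovOp_apply, Matrix.mul_assoc]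
  abel

/-- Half of the quadratic term goes to each of the two drift terms. -/
theorem riccatiRHS_eq_lyapunovOp_add {K : Fin N → Matrix (Fin d) (Fin d) ℝ} {i : Fin N}
    (hR : (R i).IsSymm) (hK : (K i).IsSymm) :
    riccatiRHS A C B Q R m K i =
      lyapunovOp (fun i => A i - (1 / 2 : ℝ) • (B i * (R i)⁻¹ * (B i)ᵀ * K i)) C m K i + Q i := by
  have hG : (B i * (R i)⁻¹ * (B i)ᵀ)ᵀ = B i * (R i)⁻¹ * (B i)ᵀ := by
    simp only [transpose_mul, transpose_transpose, transpose_nonsing_inv, hR.eq, Matrix.mul_assoc]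
  rw [riccatiRHS_eq_lyapunovOp_sub, lyapunovOp_apply, lyapunovOp_apply]
  generalize B i * (R i)⁻¹ * (B i)ᵀ = G at hG ⊢
  simp only [transpose_sub, transpose_smul, transpose_mul, hK.eq, hG,
    sub_mul, mul_sub, Matrix.smul_mul, Matrix.mul_smul, Matrix.mul_assoc]
  module

namespace IsRiccatiSolution

variable {T k c t : ℝ} {P : Fin N → Matrix (Fin d) (Fin d) ℝ}
  {K : ℝ → Fin N → Matrix (Fin d) (Fin d) ℝ}

theorem continuousOn (hK : IsRiccatiSolution T A C B Q R m P K) : ContinuousOn K (Icc 0 T) :=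
  continuousOn_pi.2 fun i t ht => (hK.2.1 t ht i).continuousWithinAt

theorem isHermitian (hK : IsRiccatiSolution T A C B Q R m P K) (ht : t ∈ Icc 0 T) (i : Fin N) :
    (K t i).IsHermitian :=
  isHermitian_iff_isSymm.2 (hK.1 t ht i)

theorem posSemidef (hK : IsRiccatiSolution T A C B Q R m P K) (hQ : ∀ i, (Q i).PosSemidef)
    (hR : ∀ i, (R i).IsSymm) (hP : ∀ i, (P i).PosSemidef) (hm : ∀ i j, i ≠ j → 0 ≤ m i j)
    (ht : t ∈ Icc 0 T) (i : Fin N) : (K t i).PosSemidef := by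
  refine posSemidef_of_lyapunov_posSemidef
    (A := fun t i => A i - (1 / 2 : ℝ) • (B i * (R i)⁻¹ * (B i)ᵀ * K t i))
    (C := fun _ => C) (m := fun _ => m) ?_ continuousOn_const continuousOn_const
    (fun _ _ => hm) (fun t ht i => hK.isHermitian ht i) hK.2.1 (fun i => hK.2.2 i ▸ hP i)
    (fun t ht i => ?_) t ht i
  · have := continuousOn_pi.1 hK.continuousOn
    exact continuousOn_pi.2 fun i => by fun_prop
  · rw [neg_neg, riccatiRHS_eq_lyapunovOp_add (hR i) (hK.1 t ht i), add_sub_cancel_left]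
    exact hQ i

/-- Comparison for `θ • 1 - K` with `θ(s) = c exp(k (T - s)) ≥ 1`: its residual is
`θ • (k • 1 - L 1 - Q) + (θ - 1) • Q + K B R⁻¹ Bᵀ K`. -/
theorem posSemidef_smul_one_sub (hK : IsRiccatiSolution T A C B Q R m P K)
    (hQ : ∀ i, (Q i).PosSemidef) (hR : ∀ i, (R i).PosDef) (hm : ∀ i j, i ≠ j → 0 ≤ m i j)
    (hk : 0 ≤ k) (hkL : ∀ i, (k • 1 - (lyapunovOp A C m 1 i + Q i)).PosSemidef)
    (hc : 1 ≤ c) (hP : ∀ i, (c • 1 - P i).PosSemidef) (ht : t ∈ Icc 0 T) (i : Fin N) :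
    ((c * Real.exp (k * (T - t))) • 1 - K t i).PosSemidef := by
  let θ : ℝ → ℝ := fun s => c * Real.exp (k * (T - s))
  refine posSemidef_of_lyapunov_posSemidef (A := fun _ => A) (C := fun _ => C) (m := fun _ => m)
    (F := fun s i => θ s • 1 - K s i)
    (F' := fun s i => (-(k * θ s)) • 1 - -riccatiRHS A C B Q R m (K s) i)
    continuousOn_const continuousOn_const continuousOn_const (fun _ _ => hm)
    (fun s hs i => (isHermitian_one.smul (.all _)).sub (hK.isHermitian hs i))
    (fun s hs i => ((hasDerivAt_mul_exp_backward c k T s).hasDerivWithinAt.smul_const _).sub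
      (hK.2.1 s hs i))
    (fun i => by simpa [θ, hK.2.2 i] using hP i) (fun s hs i => ?_) t ht i
  have hθ : 1 ≤ θ s := one_le_mul_of_one_le_of_one_le hc
    (Real.one_le_exp (mul_nonneg hk (sub_nonneg.2 hs.2)))
  have hlin : lyapunovOp A C m (fun i => θ s • 1 - K s i) =
      θ s • lyapunovOp A C m 1 - lyapunovOp A C m (K s) := by
    rw [← map_smul, ← map_sub]
    rfl
  have hresidual : -((-(k * θ s)) • 1 - -riccatiRHS A C B Q R m (K s) i)
        - lyapunovOp A C m (fun i => θ s • 1 - K s i) i =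
      θ s • (k • 1 - (lyapunovOp A C m 1 i + Q i)) + (θ s - 1) • Q i +
        K s i * (B i * (R i)⁻¹ * (B i)ᵀ) * K s i := by
    rw [hlin, riccatiRHS_eq_lyapunovOp_sub, Pi.sub_apply, Pi.smul_apply]
    module
  have hquad : (K s i * (B i * (R i)⁻¹ * (B i)ᵀ) * K s i).PosSemidef := by
    have h := (posSemidef_mul_inv_mul_transpose (hR i) (B i)).mul_mul_conjTranspose_same (K s i)
    rwa [(hK.isHermitian hs i).eq] at h
  rw [hresidual]
  exact (((hkL i).smul (zero_le_one.trans hθ)).add ((hQ i).smul (sub_nonneg.2 hθ))).add hquad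

theorem posSemidef_smul_one_sub_of_norm_add_le {M p : ℝ} (hK : IsRiccatiSolution T A C B Q R m P K)
    (hQ : ∀ i, (Q i).PosSemidef) (hR : ∀ i, (R i).PosDef) (hP : ∀ i, (P i).IsHermitian)
    (hm₁ : ∀ i j, i ≠ j → 0 ≤ m i j) (hm₂ : ∀ i, ∑ j, m i j = 0) (hM₀ : 0 ≤ M)
    (hM : ∀ i, ‖A i‖ + ‖C i‖ + ‖Q i‖ ≤ M) (hp₀ : 0 ≤ p) (hp : ∀ i, ‖P i‖ ≤ p)
    (ht : t ∈ Icc 0 T) (i : Fin N) :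
    (((d * p + 1) * Real.exp (d * (d * M ^ 2 + 2 * M) * (T - t))) • 1 - K t i).PosSemidef := by
  have hL : ∀ i, ((d * (d * M ^ 2 + 2 * M)) • 1 - (lyapunovOp A C m 1 i + Q i)).PosSemidef :=
    fun i => by
      simpa using posSemidef_smul_one_sub_lyapunovOp_one_add (hm₂ i) (hQ i).isHermitian (hM i)
  have hPp : ∀ i, ((d * p + 1) • 1 - P i).PosSemidef := fun i =>
    posSemidef_smul_one_sub_mono (by simp) (posSemidef_smul_one_sub_of_norm_le (hP i) (hp i))
  exact hK.posSemidef_smul_one_sub hQ hR hm₁ (by positivity) hL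
    (le_add_of_nonneg_left (by positivity)) hPp ht i

end IsRiccatiSolution

theorem riccati_apriori_bounds_general {ι : Type*} {d l N : ℕ} {T : ℝ}
    {A C Q P : ι → Fin N → Matrix (Fin d) (Fin d) ℝ} {B : ι → Fin N → Matrix (Fin d) (Fin l) ℝ}
    {R : ι → Fin N → Matrix (Fin l) (Fin l) ℝ} {m : ι → Fin N → Fin N → ℝ}
    {K : ι → ℝ → Fin N → Matrix (Fin d) (Fin d) ℝ}
    (hQ : ∀ n i, (Q n i).PosSemidef) (hR : ∀ n i, (R n i).PosDef)
    (hP : ∀ n i, (P n i).PosSemidef)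
    (hm₁ : ∀ n i j, i ≠ j → 0 ≤ m n i j) (hm₂ : ∀ n i, ∑ j, m n i j = 0)
    (hbdd : ∃ M : ℝ, ∀ n i, ‖A n i‖ + ‖C n i‖ + ‖Q n i‖ ≤ M)
    (hPbdd : ∃ M : ℝ, ∀ n i, ‖P n i‖ ≤ M)
    (hK : ∀ n, IsRiccatiSolution T (A n) (C n) (B n) (Q n) (R n) (m n) (P n) (K n)) :
    ∃ C₀ > (0 : ℝ), ∃ k₀ > (0 : ℝ), ∀ n, ∀ t ∈ Icc (0 : ℝ) T, ∀ (x : Fin d → ℝ), ∀ i,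
      0 ≤ x ⬝ᵥ K n t i *ᵥ x ∧
      x ⬝ᵥ K n t i *ᵥ x ≤ C₀ * Real.exp (k₀ * T) * (x ⬝ᵥ x) * (T + 1) ∧
      ‖K n t i‖ ≤ C₀ * Real.exp (k₀ * T) * (T + 1) := by
  obtain ⟨M, hM⟩ := hbdd
  obtain ⟨p, hp⟩ := hPbdd
  let k : ℝ := d * (d * |M| ^ 2 + 2 * |M|)
  let c : ℝ := d * |p| + 1
  refine ⟨c, by positivity, k + 1, by positivity, fun n t ht x i => ?_⟩
  have hlower := (hK n).posSemidef (hQ n) (fun i => isHermitian_iff_isSymm.1 (hR n i).isHermitian)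
    (hP n) (hm₁ n) ht i
  have hupper := (hK n).posSemidef_smul_one_sub_of_norm_add_le (hQ n) (hR n)
    (fun i => (hP n i).isHermitian) (hm₁ n) (hm₂ n) (abs_nonneg M)
    (fun i => (hM n i).trans (le_abs_self M)) (abs_nonneg p)
    (fun i => (hp n i).trans (le_abs_self p)) ht i
  have hexp : c * Real.exp (k * (T - t)) ≤ c * Real.exp ((k + 1) * T) * (T + 1) := by
    have hT : 0 ≤ T := ht.1.trans ht.2
    have hkT : k * (T - t) ≤ (k + 1) * T :=
      mul_le_mul (by linarith) (by linarith [ht.1]) (sub_nonneg.2 ht.2) (by positivity)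
    calc c * Real.exp (k * (T - t)) ≤ c * Real.exp ((k + 1) * T) := by gcongr
      _ ≤ c * Real.exp ((k + 1) * T) * (T + 1) :=
        le_mul_of_one_le_right (by positivity) (by linarith)
  have hbound := posSemidef_smul_one_sub_mono hexp hupper
  refine ⟨hlower.dotProduct_mulVec_nonneg x, ?_,
    norm_le_of_posSemidef (le_trans (by positivity) hexp) hlower hbound⟩
  exact ((posSemidef_smul_one_sub_iff hlower.isHermitian).1 hbound x).trans_eq (by ring)

end Riccati

/-- A priori bounds on the Riccati solutions, uniform over the approximating family. -/
theorem riccati_apriori_bounds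
    (d l N : ℕ) (hd : 0 < d) (hl : 0 < l) (hN : 0 < N)
    (T : ℝ) (hT : 0 < T)
    (A C Q : ℕ → Fin N → Matrix (Fin d) (Fin d) ℝ)
    (B : ℕ → Fin N → Matrix (Fin d) (Fin l) ℝ)
    (R : ℕ → Fin N → Matrix (Fin l) (Fin l) ℝ)
    (m : ℕ → Fin N → Fin N → ℝ)
    (P : Fin N → Matrix (Fin d) (Fin d) ℝ)
    (hQ : ∀ n i, (Q n i).PosSemidef)
    (hR : ∀ n i, (R n i).PosDef)
    (hP : ∀ i, (P i).PosDef)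
    (hm₁ : ∀ n i j, i ≠ j → 0 ≤ m n i j)
    (hm₂ : ∀ n i, ∑ j, m n i j = 0)
    (hbdd : ∃ M : ℝ, ∀ n i, ‖A n i‖ + ‖C n i‖ + ‖Q n i‖ ≤ M)
    (hmbdd : ∃ M : ℝ, ∀ n i j, |m n i j| ≤ M)
    (K : ℕ → ℝ → Fin N → Matrix (Fin d) (Fin d) ℝ)
    (hK : ∀ n, IsRiccatiSolution T (A n) (C n) (B n) (Q n) (R n) (m n) P (K n)) :
    ∃ C₀ > (0:ℝ), ∃ k₀ > (0:ℝ), ∀ n, ∀ t ∈ Icc (0:ℝ) T, ∀ (x : Fin d → ℝ), ∀ i,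
      0 ≤ x ⬝ᵥ (K n t i).mulVec x ∧
      x ⬝ᵥ (K n t i).mulVec x ≤ C₀ * Real.exp (k₀ * T) * (x ⬝ᵥ x) * (T + 1) ∧
      ‖K n t i‖ ≤ C₀ * Real.exp (k₀ * T) * (T + 1) := by
  exact riccati_apriori_bounds_general hQ hR (fun _ i => (hP i).posSemidef) hm₁ hm₂ hbdd
    ⟨‖P‖, fun _ => norm_le_pi_norm P⟩ hK
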